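/- arXiv:2506.09618 — 4 statements merged into one kernel-verified Lean document; each statement's English description precedes it below -/
import Mathlib

section
/- Let C be an arbitrary set of corner-interval minors of M. If {x_{ij}, x_{lj}} (with i ≠ l) is a vertical interval of C with j ≠ 1, then the binomial x_{i1}x_{lj} − x_{l1}x_{ij} belongs to the toric ideal J_C. -/
/-!
Suppose every minor of `C` uses the column `c`. Moving a vertical edge of a minor into column `c`
gives again a vertical edge of that minor, so positions in the same maximal vertical interval stay
in a common one after both are moved into column `c`. Moreover a vertex of `C` is joined to its
translate in column `c` by a horizontal edge, unless they coincide. The positions `(i, c)`,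
`(l, j)`, `(l, c)`, `(i, j)` are therefore the corners of a rectangle formed by two horizontal and
two vertical intervals, and `φ` sends both products of opposite corners to the same monomial.
-/

open MvPolynomial

/-- A 2-minor `[a₁,a₂|b₁,b₂]` (with `a₁ < a₂`, `b₁ < b₂`) of the `m × n` matrix
of indeterminates `M = (x_{ij})`. -/
structure Minor2 (m n : ℕ) where
  a1 : Fin m
  a2 : Fin m
  b1 : Fin n
  b2 : Fin n
  ha : a1 < a2
  hb : b1 < b2

namespace Minor2

variable {m n : ℕ}

/-- The vertex set of a 2-minor. -/
def vertexSet (δ : Minor2 m n) : Set (Fin m × Fin n) :=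
  {(δ.a1, δ.b1), (δ.a1, δ.b2), (δ.a2, δ.b1), (δ.a2, δ.b2)}

/-- `{p,q}` is one of the two vertical edges of the minor `δ`. -/
def VertEdge (δ : Minor2 m n) (p q : Fin m × Fin n) : Prop :=
  ({p, q} : Set (Fin m × Fin n)) = {(δ.a1, δ.b1), (δ.a2, δ.b1)} ∨
  ({p, q} : Set (Fin m × Fin n)) = {(δ.a1, δ.b2), (δ.a2, δ.b2)}

/-- `{p,q}` is one of the two horizontal edges of the minor `δ`. -/
def HorizEdge (δ : Minor2 m n) (p q : Fin m × Fin n) : Prop :=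
  ({p, q} : Set (Fin m × Fin n)) = {(δ.a1, δ.b1), (δ.a1, δ.b2)} ∨
  ({p, q} : Set (Fin m × Fin n)) = {(δ.a2, δ.b1), (δ.a2, δ.b2)}

/-- `{p,q}` is an edge (vertical or horizontal) of the minor `δ`. -/
def IsEdge (δ : Minor2 m n) (p q : Fin m × Fin n) : Prop :=
  δ.VertEdge p q ∨ δ.HorizEdge p q

/-- The binomial `f_δ = x_{a₁b₁}x_{a₂b₂} − x_{a₁b₂}x_{a₂b₁}` of the 2-minor `δ`. -/
noncomputable def binom (K : Type*) [Field K] (δ : Minor2 m n) : MvPolynomial (Fin m × Fin n) K :=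
  X (δ.a1, δ.b1) * X (δ.a2, δ.b2) - X (δ.a1, δ.b2) * X (δ.a2, δ.b1)

end Minor2

/-- The vertex set `V(C)` of a collection `C` of 2-minors. -/
def vertexSetOf {m n : ℕ} (C : Set (Minor2 m n)) : Set (Fin m × Fin n) :=
  ⋃ δ ∈ C, δ.vertexSet

/-- The binomial ideal `I(C)` generated by the binomials of the minors in `C`. -/
noncomputable def minorIdeal (K : Type*) [Field K] {m n : ℕ} (C : Set (Minor2 m n)) :
    Ideal (MvPolynomial (Fin m × Fin n) K) :=
  Ideal.span {f | ∃ δ ∈ C, f = Minor2.binom K δ}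

/-- Two positions are joined by a vertical edge of some minor of `C`. -/
def vertAdj {m n : ℕ} (C : Set (Minor2 m n)) (p q : Fin m × Fin n) : Prop :=
  ∃ δ ∈ C, δ.VertEdge p q

/-- Two positions are joined by a horizontal edge of some minor of `C`. -/
def horizAdj {m n : ℕ} (C : Set (Minor2 m n)) (p q : Fin m × Fin n) : Prop :=
  ∃ δ ∈ C, δ.HorizEdge p q

/-- The maximal vertical interval of `C` containing a position, encoded as the class of the
position under connectivity by vertical edges of minors of `C`. -/
def vClass {m n : ℕ} (C : Set (Minor2 m n)) (p : Fin m × Fin n) : Quot (vertAdj C) :=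
  Quot.mk _ p

/-- The maximal horizontal interval of `C` containing a position. -/
def hClass {m n : ℕ} (C : Set (Minor2 m n)) (p : Fin m × Fin n) : Quot (horizAdj C) :=
  Quot.mk _ p

/-- The monomial map `φ` with `φ(x_{ab}) = h_i v_j`, where `H_i` and `V_j` are the maximal
horizontal and vertical intervals of `C` containing `x_{ab}` (variables not appearing in any
minor of `C` are sent to products of fresh variables, so that the kernel of `φ` is the
extension to `S` of the toric ideal `J_C ⊆ S_C`). -/
noncomputable def phiC (K : Type*) [Field K] {m n : ℕ} (C : Set (Minor2 m n)) :
    MvPolynomial (Fin m × Fin n) K →ₐ[K]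
      MvPolynomial (Quot (horizAdj C) ⊕ Quot (vertAdj C)) K :=
  aeval fun p => X (Sum.inl (hClass C p)) * X (Sum.inr (vClass C p))

/-- The toric ideal `J_C = ker φ`. -/
noncomputable def toricIdeal (K : Type*) [Field K] {m n : ℕ} (C : Set (Minor2 m n)) :
    Ideal (MvPolynomial (Fin m × Fin n) K) :=
  RingHom.ker (phiC K C)

/-- A subset `W ⊆ V(C)` is admissible if for every `δ ∈ C` either `W ∩ V(δ) = ∅`
or `W` contains an edge of `δ`. -/
def Admissible {m n : ℕ} (C : Set (Minor2 m n)) (W : Set (Fin m × Fin n)) : Prop :=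
  W ⊆ vertexSetOf C ∧
    ∀ δ ∈ C, W ∩ δ.vertexSet = ∅ ∨ ∃ p q, p ∈ W ∧ q ∈ W ∧ δ.IsEdge p q

/-- `C' = {δ ∈ C : V(δ) ∩ W = ∅}`. -/
def minorsAvoiding {m n : ℕ} (C : Set (Minor2 m n)) (W : Set (Fin m × Fin n)) :
    Set (Minor2 m n) :=
  {δ ∈ C | δ.vertexSet ∩ W = ∅}

/-- The ideal generated by the variables with index in `W`. -/
noncomputable def varIdeal (K : Type*) [Field K] {m n : ℕ} (W : Set (Fin m × Fin n)) :
    Ideal (MvPolynomial (Fin m × Fin n) K) :=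
  Ideal.span ((fun p => (X p : MvPolynomial (Fin m × Fin n) K)) '' W)

/-- The prime ideal `P_W(C) = (x_{ij} : x_{ij} ∈ W) + J_{C'}`,
where `C' = {δ ∈ C : V(δ) ∩ W = ∅}`. -/
noncomputable def PW (K : Type*) [Field K] {m n : ℕ} (C : Set (Minor2 m n))
    (W : Set (Fin m × Fin n)) : Ideal (MvPolynomial (Fin m × Fin n) K) :=
  varIdeal K W + toricIdeal K (minorsAvoiding C W)

/-- A cycle `σ : h_{i₁}, v_{j₁}, h_{i₂}, v_{j₂}, …, h_{i_r}, v_{j_r}` (`r ≥ 2`) of the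
bipartite graph `G(C)`, recorded by the intersection vertices
`p k = H_{i_k} ∩ V_{j_k}` and `q k = H_{i_{k+1}} ∩ V_{j_k}` (indices cyclic, `r = len + 2`). -/
structure CycleIn {m n : ℕ} (C : Set (Minor2 m n)) where
  len : ℕ
  p : Fin (len + 2) → Fin m × Fin n
  q : Fin (len + 2) → Fin m × Fin n
  p_mem : ∀ k, p k ∈ vertexSetOf C
  q_mem : ∀ k, q k ∈ vertexSetOf C
  shareV : ∀ k, vClass C (p k) = vClass C (q k)
  shareH : ∀ k, hClass C (q k) = hClass C (p (k + 1))
  injH : Function.Injective fun k => hClass C (p k)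
  injV : Function.Injective fun k => vClass C (p k)

/-- The binomial `f_σ` associated to a cycle `σ` of `G(C)`. -/
noncomputable def cycleBinom (K : Type*) [Field K] {m n : ℕ} {C : Set (Minor2 m n)}
    (σ : CycleIn C) : MvPolynomial (Fin m × Fin n) K :=
  (∏ k, X (σ.p k)) - (∏ k, X (σ.q k))

namespace Minor2

variable {m n : ℕ} {δ : Minor2 m n} {p q : Fin m × Fin n} {c : Fin n}

/-- The two columns of a 2-minor. The condition `c ∈ δ.columns` replaces the corner-interval
condition `δ.b1 = 0` when the common column of the minors is arbitrary. -/
def columns (δ : Minor2 m n) : Set (Fin n) :=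
  {δ.b1, δ.b2}

theorem vertEdge_iff_exists_column :
    δ.VertEdge p q ↔
      ∃ b ∈ δ.columns, ({p, q} : Set (Fin m × Fin n)) = {(δ.a1, b), (δ.a2, b)} := by
  simp only [VertEdge, columns, Set.mem_insert_iff, Set.mem_singleton_iff, exists_eq_or_imp,
    exists_eq_left]

theorem VertEdge.move_to_column (h : δ.VertEdge p q) (hc : c ∈ δ.columns) :
    δ.VertEdge (p.1, c) (q.1, c) := by
  obtain ⟨b, -, hpq⟩ := vertEdge_iff_exists_column.1 h
  refine vertEdge_iff_exists_column.2 ⟨c, hc, ?_⟩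
  simpa only [Set.image_pair] using congrArg (Set.image fun r => (r.1, c)) hpq

theorem horizEdge_of_mem_vertexSet (hp : p ∈ δ.vertexSet) (hc : c ∈ δ.columns) (hcp : c ≠ p.2) :
    δ.HorizEdge (p.1, c) p := by
  rcases hc with rfl | rfl <;> rcases hp with rfl | rfl | rfl | rfl <;>
    simp_all [HorizEdge, Set.pair_comm]

end Minor2

section SharedColumn

variable {m n : ℕ} {C : Set (Minor2 m n)} {p q : Fin m × Fin n} {c : Fin n}

theorem vClass_move_to_column (hC : ∀ δ ∈ C, c ∈ δ.columns) (h : vClass C p = vClass C q) :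
    vClass C (p.1, c) = vClass C (q.1, c) := by
  have hadj : ∀ r s, vertAdj C r s → vertAdj C (r.1, c) (s.1, c) :=
    fun _ _ ⟨δ, hδ, hedge⟩ => ⟨δ, hδ, hedge.move_to_column (hC δ hδ)⟩
  exact congrArg (Quot.map (fun r => (r.1, c)) hadj) h

theorem hClass_move_to_column (hC : ∀ δ ∈ C, c ∈ δ.columns) (hp : p ∈ vertexSetOf C) :
    hClass C (p.1, c) = hClass C p := by
  obtain ⟨δ, hδ, hpδ⟩ := Set.mem_iUnion₂.1 hp
  by_cases hcp : c = p.2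
  · rw [hcp]
  · exact Quot.sound ⟨δ, hδ, Minor2.horizEdge_of_mem_vertexSet hpδ (hC δ hδ) hcp⟩

end SharedColumn

theorem rectangle_binom_mem_toricIdeal (K : Type*) [Field K] {m n : ℕ} {C : Set (Minor2 m n)}
    {p q r s : Fin m × Fin n} (hps : hClass C p = hClass C s) (hqr : hClass C q = hClass C r)
    (vpr : vClass C p = vClass C r) (vqs : vClass C q = vClass C s) :
    X p * X q - X r * X s ∈ toricIdeal K C := by
  rw [toricIdeal, RingHom.mem_ker]
  simp only [phiC, map_sub, map_mul, aeval_X, hps, hqr, vpr, vqs]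
  ring

theorem statement0_general (K : Type*) [Field K] {m n : ℕ} {C : Set (Minor2 m n)} {c : Fin n}
    (hC : ∀ δ ∈ C, c ∈ δ.columns) {i l : Fin m} {j : Fin n}
    (hi : (i, j) ∈ vertexSetOf C) (hl : (l, j) ∈ vertexSetOf C)
    (hil : vClass C (i, j) = vClass C (l, j)) :
    X (i, c) * X (l, j) - X (l, c) * X (i, j) ∈ toricIdeal K C :=
  rectangle_binom_mem_toricIdeal K (hClass_move_to_column hC hi) (hClass_move_to_column hC hl).symm
    (vClass_move_to_column hC hil) hil.symm

theorem statement0 (K : Type*) [Field K] (m n : ℕ) [NeZero n]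
    (C : Set (Minor2 m n)) (hC : ∀ δ ∈ C, δ.b1 = 0)
    (i l : Fin m) (j : Fin n) (hil : i ≠ l) (hj : j ≠ 0)
    (hiC : (i, j) ∈ vertexSetOf C) (hlC : (l, j) ∈ vertexSetOf C)
    (hpath : Relation.ReflTransGen (vertAdj C) (i, j) (l, j)) :
    X (i, (0 : Fin n)) * X (l, j) - X (l, (0 : Fin n)) * X (i, j) ∈ toricIdeal K C :=
  statement0_general K (fun δ hδ => Or.inl (hC δ hδ).symm) hiC hlC
    (Quot.eqvGen_sound (Relation.EqvGen.reflTransGen_le_eqvGen _ _ _ hpath))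
end

section
/- Let C be an arbitrary set of corner-interval minors of M and let x = ∏_{x_{ij} ∈ V(C)} x_{ij} be the product of all variables of V(C). Then the saturation of I(C) with respect to x equals the toric ideal J_C; that is, for f ∈ S_C one has f ∈ J_C if and only if x^k f ∈ I(C) for some k ≥ 0. -/
open MvPolynomial

/-!
Let `L` be the localization of `S` at `x` and `J` the extension of `I(C)` to `L`. A polynomial maps
to zero in `L / J` exactly when a power of `x` multiplies it into `I(C)`, so it suffices that
`S → L / J` factors through `φ`, that is, that each `x_{ab}` becomes in `L / J` a product of a
function of its horizontal and a function of its vertical interval. When `x_{a1}` is a variable of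
`V(C)`, write `x_{ab} = x_{a1} · (x_{ab} / x_{a1})`: the first factor depends only on the row, and
the second is constant along the vertical edges of `[a₁,a₂|1,b]` because this minor vanishes in
`L / J`. Conversely, `J_C` is a prime ideal which contains `I(C)` but no variable.
-/

namespace Minor2

variable {m n : ℕ} {δ : Minor2 m n} {p q p' q' : Fin m × Fin n}

theorem HorizEdge.fst_eq (h : δ.HorizEdge p q) : p.1 = q.1 := by
  rcases h with h | h <;> rcases Set.pair_eq_pair_iff.mp h with ⟨rfl, rfl⟩ | ⟨rfl, rfl⟩ <;> rfl

theorem VertEdge.symm (h : δ.VertEdge p q) : δ.VertEdge q p := by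
  simpa only [VertEdge, Set.pair_comm q p] using h

theorem vertEdge_iff : δ.VertEdge p q ↔ ∃ b, (b = δ.b1 ∨ b = δ.b2) ∧
    (p = (δ.a1, b) ∧ q = (δ.a2, b) ∨ p = (δ.a2, b) ∧ q = (δ.a1, b)) := by
  simp only [VertEdge, Set.pair_eq_pair_iff, or_and_right, exists_or, exists_eq_left]

theorem VertEdge.left_mem_vertexSet (h : δ.VertEdge p q) : p ∈ δ.vertexSet := by
  obtain ⟨b, rfl | rfl, ⟨rfl, -⟩ | ⟨rfl, -⟩⟩ := vertEdge_iff.mp h <;> simp [vertexSet]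

theorem VertEdge.mul_eq_mul_of_fst_eq {L : Type*} [CommMonoid L] {x : Fin m × Fin n → L}
    (hx : x (δ.a1, δ.b1) * x (δ.a2, δ.b2) = x (δ.a1, δ.b2) * x (δ.a2, δ.b1))
    (h : δ.VertEdge p q) (h' : δ.VertEdge p' q') (hp : p.1 = p'.1) :
    x p * x q' = x q * x p' := by
  have ha := δ.ha.ne
  obtain ⟨b, hb, hpq⟩ := vertEdge_iff.mp h
  obtain ⟨b', hb', hpq'⟩ := vertEdge_iff.mp h'
  have minor : x (δ.a1, b) * x (δ.a2, b') = x (δ.a2, b) * x (δ.a1, b') := by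
    rcases hb with rfl | rfl <;> rcases hb' with rfl | rfl
    · exact mul_comm _ _
    · rw [hx, mul_comm]
    · rw [← hx, mul_comm]
    · exact mul_comm _ _
  rcases hpq with ⟨rfl, rfl⟩ | ⟨rfl, rfl⟩ <;> rcases hpq' with ⟨rfl, rfl⟩ | ⟨rfl, rfl⟩
  · exact minor
  · exact absurd hp ha
  · exact absurd hp.symm ha
  · exact minor.symm

end Minor2

/-- A choice `c` of a column in each row is a pivot of `C` if every minor of `C` has one of its
vertical edges at the chosen positions of its two rows. Corner-interval minors have the first
column as a constant pivot. -/
def IsPivot {m n : ℕ} (C : Set (Minor2 m n)) (c : Fin m → Fin n) : Prop :=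
  ∀ δ ∈ C, δ.VertEdge (δ.a1, c δ.a1) (δ.a2, c δ.a2)

section Pivot

variable {m n : ℕ} {C : Set (Minor2 m n)} {c : Fin m → Fin n}

theorem isPivot_const {b : Fin n} (hC : ∀ δ ∈ C, δ.b1 = b ∨ δ.b2 = b) :
    IsPivot C fun _ => b :=
  fun δ hδ => Minor2.vertEdge_iff.mpr ⟨b, (hC δ hδ).imp Eq.symm Eq.symm, Or.inl ⟨rfl, rfl⟩⟩

theorem IsPivot.vertEdge {δ : Minor2 m n} {p q : Fin m × Fin n} (hc : IsPivot C c) (hδ : δ ∈ C)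
    (h : δ.VertEdge p q) : δ.VertEdge (p.1, c p.1) (q.1, c q.1) := by
  obtain ⟨b, -, ⟨rfl, rfl⟩ | ⟨rfl, rfl⟩⟩ := Minor2.vertEdge_iff.mp h
  · exact hc δ hδ
  · exact (hc δ hδ).symm

theorem IsPivot.exists_eq_mul {L : Type*} [CommMonoid L] (hc : IsPivot C c)
    {x : Fin m × Fin n → L} (hunit : ∀ a, (a, c a) ∈ vertexSetOf C → IsUnit (x (a, c a)))
    (hx : ∀ δ ∈ C, x (δ.a1, δ.b1) * x (δ.a2, δ.b2) = x (δ.a1, δ.b2) * x (δ.a2, δ.b1)) :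
    ∃ (h : Quot (horizAdj C) → L) (v : Quot (vertAdj C) → L),
      ∀ p, x p = h (hClass C p) * v (vClass C p) := by
  have exists_unit (a) : ∃ u : Lˣ, (a, c a) ∈ vertexSetOf C → (u : L) = x (a, c a) := by
    by_cases ha : (a, c a) ∈ vertexSetOf C
    · exact ⟨(hunit a ha).unit, fun _ => rfl⟩
    · exact ⟨1, fun h => absurd h ha⟩
  choose r hr using exists_unit
  have row_const (p q) (hpq : horizAdj C p q) : (r p.1 : L) = r q.1 := by
    obtain ⟨δ, -, hedge⟩ := hpq
    rw [hedge.fst_eq]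
  have quotient_const (p q) (hpq : vertAdj C p q) :
      x p * ((r p.1)⁻¹ : Lˣ) = x q * ((r q.1)⁻¹ : Lˣ) := by
    obtain ⟨δ, hδ, hedge⟩ := hpq
    have hpivot := hc.vertEdge hδ hedge
    have hrp := hr p.1 (Set.mem_biUnion hδ hpivot.left_mem_vertexSet)
    have hrq := hr q.1 (Set.mem_biUnion hδ hpivot.symm.left_mem_vertexSet)
    rw [Units.mul_inv_eq_iff_eq_mul, mul_right_comm, Units.eq_mul_inv_iff_mul_eq, hrp, hrq]
    exact hedge.mul_eq_mul_of_fst_eq (hx δ hδ) hpivot rfl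
  refine ⟨Quot.lift (fun p => r p.1) row_const, Quot.lift _ quotient_const, fun p => ?_⟩
  change x p = r p.1 * (x p * ((r p.1)⁻¹ : Lˣ))
  rw [mul_left_comm, Units.mul_inv, mul_one]

end Pivot

section Ideals

variable {K : Type*} [Field K] {m n : ℕ} {C : Set (Minor2 m n)}

theorem phiC_X (p : Fin m × Fin n) :
    phiC K C (X p) = X (Sum.inl (hClass C p)) * X (Sum.inr (vClass C p)) :=
  aeval_X _ p

theorem phiC_binom {δ : Minor2 m n} (hδ : δ ∈ C) : phiC K C (δ.binom K) = 0 := by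
  have row1 : hClass C (δ.a1, δ.b1) = hClass C (δ.a1, δ.b2) := Quot.sound ⟨δ, hδ, Or.inl rfl⟩
  have row2 : hClass C (δ.a2, δ.b1) = hClass C (δ.a2, δ.b2) := Quot.sound ⟨δ, hδ, Or.inr rfl⟩
  have col1 : vClass C (δ.a1, δ.b1) = vClass C (δ.a2, δ.b1) := Quot.sound ⟨δ, hδ, Or.inl rfl⟩
  have col2 : vClass C (δ.a1, δ.b2) = vClass C (δ.a2, δ.b2) := Quot.sound ⟨δ, hδ, Or.inr rfl⟩
  simp only [Minor2.binom, map_sub, map_mul, phiC_X, row1, row2, col1, col2]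
  ring

theorem minorIdeal_le_toricIdeal : minorIdeal K C ≤ toricIdeal K C := by
  refine Ideal.span_le.mpr ?_
  rintro _ ⟨δ, hδ, rfl⟩
  exact phiC_binom hδ

instance toricIdeal_isPrime : (toricIdeal K C).IsPrime :=
  RingHom.ker_isPrime _

theorem X_notMem_toricIdeal (p : Fin m × Fin n) : X p ∉ toricIdeal K C := by
  rw [toricIdeal, RingHom.mem_ker, phiC_X]
  exact mul_ne_zero (X_ne_zero _) (X_ne_zero _)

theorem prod_X_pow_mul_mem_toricIdeal_iff (T : Finset (Fin m × Fin n)) (k : ℕ)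
    (f : MvPolynomial (Fin m × Fin n) K) :
    (∏ p ∈ T, X p) ^ k * f ∈ toricIdeal K C ↔ f ∈ toricIdeal K C := by
  have hT : ∏ p ∈ T, X p ∉ toricIdeal K C := by
    simp only [Ideal.IsPrime.prod_mem_iff, X_notMem_toricIdeal, and_false, exists_false,
      not_false_eq_true]
  refine ⟨fun h => ?_, Ideal.mul_mem_left _ _⟩
  exact (toricIdeal_isPrime.mem_or_mem h).resolve_left fun hpow =>
    hT (toricIdeal_isPrime.mem_of_pow_mem k hpow)

variable {L : Type*} [CommRing L] [Algebra K L] {π : MvPolynomial (Fin m × Fin n) K →ₐ[K] L}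

theorem toricIdeal_le_ker_of_eq_mul {h : Quot (horizAdj C) → L} {v : Quot (vertAdj C) → L}
    (hπ : ∀ p, π (X p) = h (hClass C p) * v (vClass C p)) :
    toricIdeal K C ≤ RingHom.ker π := by
  have factors : π = (aeval (Sum.elim h v)).comp (phiC K C) := by
    ext p
    simp [phiC_X, hπ]
  intro f hf
  rw [RingHom.mem_ker, factors, AlgHom.comp_apply, RingHom.mem_ker.mp hf, map_zero]

theorem IsPivot.toricIdeal_le_ker {c : Fin m → Fin n} (hc : IsPivot C c)
    (hunit : ∀ a, (a, c a) ∈ vertexSetOf C → IsUnit (π (X (a, c a))))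
    (hminor : minorIdeal K C ≤ RingHom.ker π) : toricIdeal K C ≤ RingHom.ker π := by
  have hx (δ) (hδ : δ ∈ C) : π (X (δ.a1, δ.b1)) * π (X (δ.a2, δ.b2)) =
      π (X (δ.a1, δ.b2)) * π (X (δ.a2, δ.b1)) := by
    have hbinom : π (δ.binom K) = 0 := hminor (Ideal.subset_span ⟨δ, hδ, rfl⟩)
    simpa only [Minor2.binom, map_sub, map_mul, sub_eq_zero] using hbinom
  obtain ⟨h, v, hπ⟩ := hc.exists_eq_mul (x := fun p => π (X p)) hunit hx
  exact toricIdeal_le_ker_of_eq_mul hπ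

end Ideals

theorem exists_pow_mul_mem_iff_algebraMap_mem_map {R : Type*} (L : Type*) [CommRing R]
    [CommRing L] [Algebra R L] (x : R) [IsLocalization.Away x L] {I : Ideal R} {f : R} :
    (∃ k : ℕ, x ^ k * f ∈ I) ↔ algebraMap R L f ∈ I.map (algebraMap R L) := by
  simp [IsLocalization.algebraMap_mem_map_algebraMap_iff (Submonoid.powers x),
    Submonoid.mem_powers_iff]

/-- Only the pivot variables have to be inverted. -/
theorem statement1_general {K : Type*} [Field K] {m n : ℕ} {C : Set (Minor2 m n)}
    {c : Fin m → Fin n} (hc : IsPivot C c) {T : Finset (Fin m × Fin n)}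
    (hT : ∀ a, (a, c a) ∈ vertexSetOf C → (a, c a) ∈ T) (f : MvPolynomial (Fin m × Fin n) K) :
    f ∈ toricIdeal K C ↔ ∃ k : ℕ, (∏ p ∈ T, X p) ^ k * f ∈ minorIdeal K C := by
  refine ⟨fun hf => ?_, fun ⟨k, hk⟩ =>
    (prod_X_pow_mul_mem_toricIdeal_iff T k f).mp (minorIdeal_le_toricIdeal hk)⟩
  let L := Localization.Away (∏ p ∈ T, (X p : MvPolynomial (Fin m × Fin n) K))
  let J : Ideal L := (minorIdeal K C).map (algebraMap _ L)
  let π : MvPolynomial (Fin m × Fin n) K →ₐ[K] L ⧸ J :=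
    (Ideal.Quotient.mkₐ K J).comp (IsScalarTower.toAlgHom K _ L)
  have ker_π (g) : g ∈ RingHom.ker π ↔ algebraMap _ L g ∈ J := Ideal.Quotient.eq_zero_iff_mem
  have isUnit_π (p) (hp : p ∈ T) : IsUnit (π (X p)) := by
    have hprod : IsUnit (algebraMap (MvPolynomial (Fin m × Fin n) K) L (∏ p ∈ T, X p)) :=
      IsLocalization.Away.algebraMap_isUnit _
    have hX : IsUnit (algebraMap (MvPolynomial (Fin m × Fin n) K) L (X p)) :=
      isUnit_of_dvd_unit (map_dvd _ (Finset.dvd_prod_of_mem X hp)) hprod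
    exact hX.map (Ideal.Quotient.mk J)
  have minorIdeal_le : minorIdeal K C ≤ RingHom.ker π :=
    fun g hg => (ker_π g).mpr (Ideal.mem_map_of_mem _ hg)
  rw [exists_pow_mul_mem_iff_algebraMap_mem_map L]
  exact (ker_π f).mp (hc.toricIdeal_le_ker (fun a ha => isUnit_π _ (hT a ha)) minorIdeal_le hf)

theorem statement1 (K : Type*) [Field K] (m n : ℕ) [NeZero n]
    (C : Set (Minor2 m n)) (hC : ∀ δ ∈ C, δ.b1 = 0)
    (f : MvPolynomial (Fin m × Fin n) K) :
    f ∈ toricIdeal K C ↔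
      ∃ k : ℕ, (∏ p ∈ (Set.toFinite (vertexSetOf C)).toFinset, X p) ^ k * f ∈
        minorIdeal K C :=
  statement1_general (isPivot_const fun δ hδ => Or.inl (hC δ hδ))
    (fun _ ha => (Set.Finite.mem_toFinset _).mpr ha) f
end

section
/- Let C be an arbitrary set of corner-interval minors of M, let P be a prime ideal of S_C containing I(C), and let W = {x_{ij} ∈ V(C) : x_{ij} ∈ P}. Then W is an admissible set; that is, for every δ ∈ C, either W ∩ V(δ) = ∅ or W contains an edge of δ. -/
open MvPolynomial

/-!
Modulo a prime ideal `P` containing `f_δ`, the two diagonals of `δ` have equal products, so one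
diagonal has a variable in `P` exactly when the other does. As any vertex of one diagonal together
with any vertex of the other forms an edge of `δ`, the minor either has no variable in `P` or has
an edge in `P`.
-/

theorem mem_or_mem_iff_of_mul_sub_mul_mem {R : Type*} [Ring R] {P : Ideal R} [P.IsTwoSided]
    (hP : P.IsPrime) {a b c d : R} (h : a * b - c * d ∈ P) : a ∈ P ∨ b ∈ P ↔ c ∈ P ∨ d ∈ P := by
  rw [← hP.mul_mem_iff_mem_or_mem, ← hP.mul_mem_iff_mem_or_mem]
  exact ⟨fun hab => (P.sub_mem_iff_right hab).1 h, fun hcd => (P.sub_mem_iff_left hcd).1 h⟩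

theorem vertexSet_subset_vertexSetOf {m n : ℕ} {C : Set (Minor2 m n)} {δ : Minor2 m n}
    (hδ : δ ∈ C) : δ.vertexSet ⊆ vertexSetOf C :=
  Set.subset_biUnion_of_mem (u := Minor2.vertexSet) hδ

theorem binom_mem_minorIdeal (K : Type*) [Field K] {m n : ℕ} {C : Set (Minor2 m n)}
    {δ : Minor2 m n} (hδ : δ ∈ C) : δ.binom K ∈ minorIdeal K C :=
  Ideal.subset_span ⟨δ, hδ, rfl⟩

namespace Minor2

variable {m n : ℕ} {δ : Minor2 m n}

/-- The main diagonal of a 2-minor: the positions in the positive term of its binomial. -/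
def diagonal (δ : Minor2 m n) : Set (Fin m × Fin n) :=
  {(δ.a1, δ.b1), (δ.a2, δ.b2)}

/-- The antidiagonal of a 2-minor: the positions in the negative term of its binomial. -/
def antidiagonal (δ : Minor2 m n) : Set (Fin m × Fin n) :=
  {(δ.a1, δ.b2), (δ.a2, δ.b1)}

theorem vertexSet_eq_diagonal_union_antidiagonal (δ : Minor2 m n) :
    δ.vertexSet = δ.diagonal ∪ δ.antidiagonal := by
  ext p
  simp only [vertexSet, diagonal, antidiagonal, Set.mem_union, Set.mem_insert_iff,
    Set.mem_singleton_iff]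
  tauto

theorem isEdge_of_mem_diagonal_of_mem_antidiagonal {p q : Fin m × Fin n}
    (hp : p ∈ δ.diagonal) (hq : q ∈ δ.antidiagonal) : δ.IsEdge p q := by
  rcases hp with rfl | rfl <;> rcases hq with rfl | rfl
  · exact .inr (.inl rfl)
  · exact .inl (.inl rfl)
  · exact .inl (.inr (Set.pair_comm _ _))
  · exact .inr (.inr (Set.pair_comm _ _))

theorem inter_vertexSet_eq_empty_or_exists_isEdge {W : Set (Fin m × Fin n)}
    (hW : (W ∩ δ.diagonal).Nonempty ↔ (W ∩ δ.antidiagonal).Nonempty) :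
    W ∩ δ.vertexSet = ∅ ∨ ∃ p q, p ∈ W ∧ q ∈ W ∧ δ.IsEdge p q := by
  rcases (W ∩ δ.diagonal).eq_empty_or_nonempty with hdiag | hdiag
  · have hanti : W ∩ δ.antidiagonal = ∅ := by
      rwa [← Set.not_nonempty_iff_eq_empty, ← hW, Set.not_nonempty_iff_eq_empty]
    left
    rw [vertexSet_eq_diagonal_union_antidiagonal, Set.inter_union_distrib_left, hdiag, hanti,
      Set.union_empty]
  · obtain ⟨p, hpW, hp⟩ := hdiag
    obtain ⟨q, hqW, hq⟩ := hW.1 ⟨p, hpW, hp⟩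
    exact .inr ⟨p, q, hpW, hqW, isEdge_of_mem_diagonal_of_mem_antidiagonal hp hq⟩

theorem exists_X_mem_diagonal_iff_antidiagonal {K : Type*} [Field K]
    {P : Ideal (MvPolynomial (Fin m × Fin n) K)} (hP : P.IsPrime) (hδ : δ.binom K ∈ P) :
    (∃ p ∈ δ.diagonal, X p ∈ P) ↔ ∃ p ∈ δ.antidiagonal, X p ∈ P := by
  simpa only [diagonal, antidiagonal, Set.exists_mem_insert, Set.mem_singleton_iff,
    exists_eq_left] using mem_or_mem_iff_of_mul_sub_mul_mem hP hδ

end Minor2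

theorem statement4_general (K : Type*) [Field K] {m n : ℕ} (C : Set (Minor2 m n))
    (P : Ideal (MvPolynomial (Fin m × Fin n) K)) (hP : P.IsPrime) (hIP : minorIdeal K C ≤ P) :
    Admissible C {p | p ∈ vertexSetOf C ∧ (X p : MvPolynomial (Fin m × Fin n) K) ∈ P} := by
  refine ⟨fun p hp => hp.1, fun δ hδ => Minor2.inter_vertexSet_eq_empty_or_exists_isEdge ?_⟩
  have hiff := Minor2.exists_X_mem_diagonal_iff_antidiagonal hP
    (hIP (binom_mem_minorIdeal K hδ))
  obtain ⟨hdiag, hanti⟩ : δ.diagonal ⊆ vertexSetOf C ∧ δ.antidiagonal ⊆ vertexSetOf C := by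
    rw [← Set.union_subset_iff, ← δ.vertexSet_eq_diagonal_union_antidiagonal]
    exact vertexSet_subset_vertexSetOf hδ
  constructor
  · rintro ⟨p, ⟨-, hpP⟩, hp⟩
    obtain ⟨q, hq, hqP⟩ := hiff.1 ⟨p, hp, hpP⟩
    exact ⟨q, ⟨hanti hq, hqP⟩, hq⟩
  · rintro ⟨q, ⟨-, hqP⟩, hq⟩
    obtain ⟨p, hp, hpP⟩ := hiff.2 ⟨q, hq, hqP⟩
    exact ⟨p, ⟨hdiag hp, hpP⟩, hp⟩

theorem statement4 (K : Type*) [Field K] (m n : ℕ) [NeZero n]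
    (C : Set (Minor2 m n)) (hC : ∀ δ ∈ C, δ.b1 = 0)
    (P : Ideal (MvPolynomial (Fin m × Fin n) K)) (hP : P.IsPrime)
    (hIP : minorIdeal K C ≤ P) :
    Admissible C {p | p ∈ vertexSetOf C ∧ (X p : MvPolynomial (Fin m × Fin n) K) ∈ P} :=
  statement4_general K C P hP hIP
end

section
/- Let C be an arbitrary set of corner-interval minors of M, let W and V be two admissible sets of C, and let P_W(C) = (W) + J_{C'} and P_V(C) = (V) + J_{C''} be the corresponding prime ideals, where C' = {δ ∈ C : V(δ) ∩ W = ∅} and C'' = {δ ∈ C : V(δ) ∩ V = ∅}. Then P_W(C) ⊆ P_V(C) if and only if W ⊆ V and for every cycle σ : h_{i₁}, v_{j₁}, h_{i₂}, v_{j₂}, …, h_{i_r}, v_{j_r} of G(C') (r ≥ 2) whose binomial f_σ lies in J_{C'} ∖ J_{C''}, there exist indices k and l (with indices taken modulo r, so i_{r+1} = i₁) such that the vertices x_{a_{i_k} b_{j_k}} and x_{a_{i_{l+1}} b_{j_l}} belong to V. -/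
open MvPolynomial

/-! The monomial map with kernel `J_D` records the multisets of maximal horizontal and of maximal
vertical intervals that a monomial uses. Two monomials with the same image differ by exchanging the
vertices `p k` of a cycle of `G(D)` for its vertices `q k`, one cycle after the other, so `J_D` is
generated by the cycle binomials. The cycles of `C'' = {δ ∈ C : V(δ) ∩ V = ∅}` avoid `V`, so the
substitution killing the variables in `V` preserves `J_{C''}`, and `f ∈ P_V(C)` exactly when this
substitution sends `f` into `J_{C''}`. A variable therefore lies in `P_V(C)` exactly when it belongs
to `V`, and the binomial of a cycle exactly when it lies in `J_{C''}` or both of its monomials meet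
`V`: if only one of them did, the other would lie in `J_{C''}`, which contains no monomial. -/

section PeriodicOrbits

open Function

variable {α : Type*} {f : α → α}

theorem exists_mem_periodicPts_of_mapsTo {S : Set α} (hS : S.Finite) (hne : S.Nonempty)
    (hf : Set.MapsTo f S S) : ∃ x ∈ S, x ∈ periodicPts f := by
  obtain ⟨x, hx⟩ := hne
  have hmem (i : ℕ) : f^[i] x ∈ S := hf.iterate i hx
  obtain ⟨i, -, j, -, hij, heq⟩ :=
    Set.infinite_univ.exists_lt_map_eq_of_mapsTo (fun i _ => hmem i) hS
  refine ⟨f^[i] x, hmem i, mk_mem_periodicPts (Nat.sub_pos_of_lt hij) ?_⟩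
  rw [IsPeriodicPt, IsFixedPt, ← iterate_add_apply, Nat.sub_add_cancel hij.le, heq]

theorem exists_injective_fin_of_mem_periodicPts {x : α} (hx : x ∈ periodicPts f) :
    ∃ (r : ℕ) (c : Fin (r + 1) → α),
      Injective c ∧ (∀ k, c (k + 1) = f (c k)) ∧ ∀ k, ∃ i, c k = f^[i] x := by
  obtain ⟨r, hr⟩ := Nat.exists_eq_add_one.mpr (minimalPeriod_pos_of_mem_periodicPts hx)
  refine ⟨r, fun k => f^[k] x, fun k l hkl => Fin.ext ?_, fun k => ?_, fun k => ⟨k, rfl⟩⟩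
  · exact iterate_injOn_Iio_minimalPeriod (k.isLt.trans_eq hr.symm) (l.isLt.trans_eq hr.symm) hkl
  · rw [← iterate_succ_apply' f, ← iterate_mod_minimalPeriod_eq (n := k.val.succ), hr]
    simp [Fin.val_add]

end PeriodicOrbits

section AlternatingCycles

variable {α H L : Type*} {h : α → H} {v : α → L}

/-- Regard each `a : α` as an edge joining `h a` and `v a` in a bipartite graph on `H ⊕ L`. Then
`p 0, q 0, p 1, q 1, …` are the consecutive edges of a cycle. The case `r = 0`, in which `p 0` and
`q 0` are parallel edges or even equal, is allowed. -/
structure IsAlternatingCycle (h : α → H) (v : α → L) {r : ℕ} (p q : Fin (r + 1) → α) : Prop where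
  v_eq : ∀ k, v (p k) = v (q k)
  h_eq : ∀ k, h (q k) = h (p (k + 1))
  injective_h : Function.Injective (h ∘ p)
  injective_v : Function.Injective (v ∘ p)

namespace IsAlternatingCycle

variable {r : ℕ} {p q : Fin (r + 1) → α}

theorem injective_left (hpq : IsAlternatingCycle h v p q) : Function.Injective p :=
  hpq.injective_h.of_comp

theorem injective_right (hpq : IsAlternatingCycle h v p q) : Function.Injective q := by
  have hvq : v ∘ p = v ∘ q := funext hpq.v_eq
  exact (hvq ▸ hpq.injective_v).of_comp

theorem map_v (hpq : IsAlternatingCycle h v p q) :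
    (Finset.univ.val.map p).map v = (Finset.univ.val.map q).map v := by
  simp only [Multiset.map_map, Function.comp_apply, hpq.v_eq]

theorem map_h (hpq : IsAlternatingCycle h v p q) :
    (Finset.univ.val.map p).map h = (Finset.univ.val.map q).map h := by
  simp only [Multiset.map_map, Function.comp_apply, hpq.h_eq]
  conv_lhs => rw [← Multiset.map_univ_val_equiv (Equiv.addRight (1 : Fin (r + 1)))]
  simp only [Multiset.map_map, Function.comp_apply, Equiv.coe_addRight]

end IsAlternatingCycle

/- Follow the column of an edge in `S` to an edge in `T`, and then its row back to an edge in `S`.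
The choices depend only on the column and on the row, so that edges of a periodic orbit with equal
rows are equal, and likewise for columns. -/
theorem exists_isAlternatingCycle {S T : Set α} (hS : S.Finite) (hne : S.Nonempty)
    (hv : v '' S ⊆ v '' T) (hh : h '' T ⊆ h '' S) :
    ∃ (r : ℕ) (p q : Fin (r + 1) → α),
      (∀ k, p k ∈ S) ∧ (∀ k, q k ∈ T) ∧ IsAlternatingCycle h v p q := by
  have : Nonempty α := hne.to_type
  let toT (a : α) : α := Function.invFunOn v T (v a)
  let toS (b : α) : α := Function.invFunOn h S (h b)
  have toT_mem {a : α} (ha : a ∈ S) : toT a ∈ T :=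
    Function.invFunOn_mem (hv (Set.mem_image_of_mem v ha))
  have v_toT {a : α} (ha : a ∈ S) : v (toT a) = v a :=
    Function.invFunOn_eq (hv (Set.mem_image_of_mem v ha))
  have toS_mem {b : α} (hb : b ∈ T) : toS b ∈ S :=
    Function.invFunOn_mem (hh (Set.mem_image_of_mem h hb))
  have h_toS {b : α} (hb : b ∈ T) : h (toS b) = h b :=
    Function.invFunOn_eq (hh (Set.mem_image_of_mem h hb))
  have hmaps : Set.MapsTo (toS ∘ toT) S S := fun a ha => toS_mem (toT_mem ha)
  obtain ⟨x, hxS, hx⟩ := exists_mem_periodicPts_of_mapsTo hS hne hmaps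
  obtain ⟨r, p, hinj, hsucc, hiter⟩ := exists_injective_fin_of_mem_periodicPts hx
  have hpS (k) : p k ∈ S := by
    obtain ⟨i, hi⟩ := hiter k
    exact hi ▸ hmaps.iterate i hxS
  have h_succ (k) : h (toT (p k)) = h (p (k + 1)) := by
    rw [hsucc, Function.comp_apply, h_toS (toT_mem (hpS k))]
  have toS_p (k) : toS (p k) = p k := by
    obtain ⟨l, rfl⟩ := (Equiv.addRight (1 : Fin (r + 1))).surjective k
    rw [Equiv.coe_addRight, hsucc, Function.comp_apply]
    exact congrArg (Function.invFunOn h S) (h_toS (toT_mem (hpS l)))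
  refine ⟨r, p, toT ∘ p, hpS, fun k => toT_mem (hpS k),
    fun k => (v_toT (hpS k)).symm, h_succ, fun k l hkl => hinj ?_, fun k l hkl => ?_⟩
  · rw [← toS_p k, ← toS_p l]
    exact congrArg (Function.invFunOn h S) hkl
  · have hkl' : toT (p k) = toT (p l) := congrArg (Function.invFunOn v T) hkl
    refine add_right_cancel (hinj (?_ : p (k + 1) = p (l + 1)))
    rw [hsucc, hsucc, Function.comp_apply, Function.comp_apply, hkl']

theorem exists_isAlternatingCycle_add {s t : Multiset α} (hs : s ≠ 0)
    (hh : s.map h = t.map h) (hv : s.map v = t.map v) :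
    ∃ (r : ℕ) (p q : Fin (r + 1) → α) (s' t' : Multiset α), IsAlternatingCycle h v p q ∧
      s = Finset.univ.val.map p + s' ∧ t = Finset.univ.val.map q + t' ∧
      s'.map h = t'.map h ∧ s'.map v = t'.map v := by
  classical
  have hfin : {a | a ∈ s}.Finite :=
    s.toFinset.finite_toSet.subset fun a => Multiset.mem_toFinset.mpr
  have hv_image : v '' {a | a ∈ s} ⊆ v '' {a | a ∈ t} := fun c hc =>
    Multiset.mem_map.mp (hv ▸ Multiset.mem_map.mpr hc)
  have hh_image : h '' {a | a ∈ t} ⊆ h '' {a | a ∈ s} := fun c hc =>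
    Multiset.mem_map.mp (hh ▸ Multiset.mem_map.mpr hc)
  obtain ⟨r, p, q, hp, hq, hpq⟩ := exists_isAlternatingCycle hfin
    (Multiset.exists_mem_of_ne_zero hs) hv_image hh_image
  have hle {c : Fin (r + 1) → α} {w : Multiset α} (hc : Function.Injective c)
      (hw : ∀ k, c k ∈ w) : Finset.univ.val.map c ≤ w := by
    rw [Multiset.le_iff_subset (Finset.univ.nodup.map hc)]
    intro a ha
    obtain ⟨k, -, rfl⟩ := Multiset.mem_map.mp ha
    exact hw k
  obtain ⟨s', rfl⟩ := Multiset.le_iff_exists_add.mp (hle hpq.injective_left hp)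
  obtain ⟨t', rfl⟩ := Multiset.le_iff_exists_add.mp (hle hpq.injective_right hq)
  rw [Multiset.map_add, Multiset.map_add] at hh hv
  rw [hpq.map_h] at hh
  rw [hpq.map_v] at hv
  exact ⟨r, p, q, s', t', hpq, rfl, rfl, add_left_cancel hh, add_left_cancel hv⟩

theorem multiset_prod_map_eq_of_isAlternatingCycle {M : Type*} [CommMonoid M] {g : α → M}
    (hg : ∀ {r : ℕ} {p q : Fin (r + 1) → α}, IsAlternatingCycle h v p q →
      ∏ k, g (p k) = ∏ k, g (q k))
    {s t : Multiset α} (hh : s.map h = t.map h) (hv : s.map v = t.map v) :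
    (s.map g).prod = (t.map g).prod := by
  induction s using Multiset.strongInductionOn generalizing t with
  | ih s ih =>
    rcases eq_or_ne s 0 with rfl | hs
    · rw [Multiset.map_eq_zero.mp (hh.symm.trans (Multiset.map_zero h))]
    obtain ⟨r, p, q, s', t', hpq, rfl, rfl, hh', hv'⟩ := exists_isAlternatingCycle_add hs hh hv
    have hlt : s' < Finset.univ.val.map p + s' :=
      lt_add_of_pos_left s' (pos_iff_ne_zero.mpr (by simp [← Multiset.card_eq_zero]))
    rw [Multiset.map_add, Multiset.map_add, Multiset.prod_add, Multiset.prod_add,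
      ih s' hlt hh' hv', Multiset.map_map, Multiset.map_map]
    exact congrArg (· * _) (hg hpq)

end AlternatingCycles

section EdgeMap

variable (R : Type*) [CommSemiring R] {α H L : Type*} (h : α → H) (v : α → L)

/-- The monomial map of the bipartite graph on `H ⊕ L` whose edges are the `a : α`, joining `h a`
and `v a`. Its kernel is the toric ideal of the graph. -/
noncomputable def edgeMap : MvPolynomial α R →ₐ[R] MvPolynomial (H ⊕ L) R :=
  aeval fun a => X (Sum.inl (h a)) * X (Sum.inr (v a))

theorem edgeMap_monomial (u : α →₀ ℕ) :
    edgeMap R h v (monomial u 1) = monomial ((u.mapDomain h).sumElim (u.mapDomain v)) 1 := by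
  rw [edgeMap, aeval_monomial, map_one, monomial_eq, C_1, one_mul, one_mul, Finsupp.prod_sumElim,
    Finsupp.prod_mapDomain_index (by simp) (by simp [pow_add]),
    Finsupp.prod_mapDomain_index (by simp) (by simp [pow_add]), ← Finsupp.prod_mul]
  simp only [mul_pow, Function.comp_apply]

variable {R h v}

theorem edgeMap_prod_X_eq {r : ℕ} {p q : Fin (r + 1) → α} (hpq : IsAlternatingCycle h v p q) :
    edgeMap R h v (∏ k, X (p k)) = edgeMap R h v (∏ k, X (q k)) := by
  have hh : ∏ k, (X (Sum.inl (h (p k))) : MvPolynomial (H ⊕ L) R)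
      = ∏ k, X (Sum.inl (h (q k))) := by
    simp only [hpq.h_eq]
    exact (Equiv.prod_comp (Equiv.addRight (1 : Fin (r + 1))) fun k => X (Sum.inl (h (p k)))).symm
  simp only [edgeMap, map_prod, aeval_X, Finset.prod_mul_distrib, hh, hpq.v_eq]

theorem edgeMap_prod_X_ne_zero [Nontrivial R] [NoZeroDivisors R] {ι : Type*} (s : Finset ι)
    (g : ι → α) : edgeMap R h v (∏ k ∈ s, X (g k)) ≠ 0 := by
  simp [edgeMap, Finset.prod_ne_zero_iff]

theorem eq_zero_of_factorsThrough_monomial {σ τ N : Type*} [AddCommMonoid N] [Module R N]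
    {f : MvPolynomial σ R →ₗ[R] MvPolynomial τ R} {g : MvPolynomial σ R →ₗ[R] N}
    {e : (σ →₀ ℕ) → (τ →₀ ℕ)} (hf : ∀ u, f (monomial u 1) = monomial (e u) 1)
    (hg : Function.FactorsThrough (fun u => g (monomial u 1)) e)
    {x : MvPolynomial σ R} (hx : f x = 0) : g x = 0 := by
  obtain ⟨g', hg'⟩ := (Function.factorsThrough_iff _).mp hg
  let lift : MvPolynomial τ R →ₗ[R] N := (basisMonomials τ R).constr R g'
  have hlift : g = lift ∘ₗ f := (basisMonomials σ R).ext fun u => by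
    rw [LinearMap.comp_apply, coe_basisMonomials, hf, ← congrFun (coe_basisMonomials τ R) (e u),
      Module.Basis.constr_basis]
    exact congrFun hg' u
  rw [hlift, LinearMap.comp_apply, hx, map_zero]

theorem map_monomial_one_eq_prod {A : Type*} [CommSemiring A] [Algebra R A]
    (f : MvPolynomial α R →ₐ[R] A) (u : α →₀ ℕ) :
    f (monomial u 1) = ((Finsupp.toMultiset u).map fun a => f (X a)).prod := by
  rw [Finsupp.toMultiset_map, Finsupp.prod_toMultiset,
    Finsupp.prod_mapDomain_index pow_zero pow_add, monomial_eq, C_1, one_mul, map_finsuppProd]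
  simp only [map_pow]

end EdgeMap

section ToricKernel

variable {R : Type*} [CommRing R] {α H L : Type*} {h : α → H} {v : α → L}

theorem ker_edgeMap_le {I : Ideal (MvPolynomial α R)}
    (hI : ∀ {r : ℕ} {p q : Fin (r + 1) → α}, IsAlternatingCycle h v p q →
      ∏ k, X (p k) - ∏ k, X (q k) ∈ I) :
    RingHom.ker (edgeMap R h v) ≤ I := by
  let π := Ideal.Quotient.mkₐ R I
  have hcycle {r : ℕ} {p q : Fin (r + 1) → α} (hpq : IsAlternatingCycle h v p q) :
      ∏ k, π (X (p k)) = ∏ k, π (X (q k)) := by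
    rw [← map_prod, ← map_prod]
    exact Ideal.Quotient.eq.mpr (hI hpq)
  have hmonomial : Function.FactorsThrough (fun u => π (monomial u 1))
      fun u => (u.mapDomain h).sumElim (u.mapDomain v) := by
    intro u u' huu'
    have hh : u.mapDomain h = u'.mapDomain h := Finsupp.ext fun c =>
      DFunLike.congr_fun huu' (Sum.inl c)
    have hv : u.mapDomain v = u'.mapDomain v := Finsupp.ext fun c =>
      DFunLike.congr_fun huu' (Sum.inr c)
    simp only [map_monomial_one_eq_prod]
    apply multiset_prod_map_eq_of_isAlternatingCycle (h := h) (v := v) hcycle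
    · rw [Finsupp.toMultiset_map, Finsupp.toMultiset_map, hh]
    · rw [Finsupp.toMultiset_map, Finsupp.toMultiset_map, hv]
  intro x hx
  exact Ideal.Quotient.eq_zero_iff_mem.mp (eq_zero_of_factorsThrough_monomial
    (f := (edgeMap R h v).toLinearMap) (g := π.toLinearMap) (edgeMap_monomial R h v) hmonomial hx)

theorem ker_edgeMap : RingHom.ker (edgeMap R h v) =
    Ideal.span {f | ∃ (r : ℕ) (p q : Fin (r + 1) → α),
      IsAlternatingCycle h v p q ∧ f = ∏ k, X (p k) - ∏ k, X (q k)} := by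
  refine le_antisymm (ker_edgeMap_le fun hpq => Ideal.subset_span ⟨_, _, _, hpq, rfl⟩) ?_
  rw [Ideal.span_le]
  rintro _ ⟨r, p, q, hpq, rfl⟩
  exact (RingHom.sub_mem_ker_iff _).mpr (edgeMap_prod_X_eq hpq)

end ToricKernel

section KillVars

variable {R σ : Type*} {V : Set σ}

/-- The substitution of `0` for the variables with index in `V`. -/
noncomputable def killVars (R : Type*) [CommSemiring R] {σ : Type*} (V : Set σ) :
    MvPolynomial σ R →ₐ[R] MvPolynomial σ R :=
  aeval (Vᶜ.indicator X)

section CommSemiring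

variable [CommSemiring R]

theorem killVars_X_of_mem {i : σ} (hi : i ∈ V) : killVars R V (X i) = 0 := by
  rw [killVars, aeval_X, Set.indicator_of_notMem (Set.notMem_compl_iff.mpr hi)]

theorem killVars_X_of_notMem {i : σ} (hi : i ∉ V) : killVars R V (X i) = X i := by
  rw [killVars, aeval_X, Set.indicator_of_mem (Set.mem_compl hi)]

theorem killVars_prod_X_of_exists_mem {ι : Type*} [Fintype ι] {g : ι → σ} (hg : ∃ k, g k ∈ V) :
    killVars R V (∏ k, X (g k)) = 0 := by
  obtain ⟨k, hk⟩ := hg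
  rw [map_prod]
  exact Finset.prod_eq_zero (Finset.mem_univ k) (killVars_X_of_mem hk)

theorem killVars_prod_X_of_forall_notMem {ι : Type*} [Fintype ι] {g : ι → σ}
    (hg : ∀ k, g k ∉ V) : killVars R V (∏ k, X (g k)) = ∏ k, X (g k) := by
  rw [map_prod]
  exact Finset.prod_congr rfl fun k _ => killVars_X_of_notMem (hg k)

end CommSemiring

variable [CommRing R]

theorem sub_killVars_mem_span (f : MvPolynomial σ R) :
    f - killVars R V f ∈ Ideal.span (X (R := R) '' V) := by
  let π := Ideal.Quotient.mkₐ R (Ideal.span (X (R := R) '' V))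
  have hπ : π.comp (killVars R V) = π := algHom_ext fun i => by
    rw [AlgHom.comp_apply]
    by_cases hi : i ∈ V
    · rw [killVars_X_of_mem hi, map_zero]
      exact (Ideal.Quotient.eq_zero_iff_mem.mpr
        (Ideal.subset_span (Set.mem_image_of_mem X hi))).symm
    · rw [killVars_X_of_notMem hi]
  exact Ideal.Quotient.eq.mp (DFunLike.congr_fun hπ f).symm

theorem mem_span_X_sup_iff_killVars_mem {J : Ideal (MvPolynomial σ R)}
    (hJ : J ≤ J.comap (killVars R V)) {f : MvPolynomial σ R} :
    f ∈ Ideal.span (X (R := R) '' V) ⊔ J ↔ killVars R V f ∈ J := by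
  constructor
  · have hX : Ideal.span (X (R := R) '' V) ≤ J.comap (killVars R V) := by
      rw [Ideal.span_le]
      rintro _ ⟨i, hi, rfl⟩
      exact Ideal.mem_comap.mpr (killVars_X_of_mem (R := R) hi ▸ J.zero_mem)
    exact fun hf => sup_le hX hJ hf
  · intro hf
    rw [← sub_add_cancel f (killVars R V f)]
    exact Submodule.add_mem_sup (sub_killVars_mem_span f) hf

end KillVars

section Intervals

theorem eq_of_quot_mk_eq_of_notMem {α : Type*} {r : α → α → Prop} {S : Set α}
    (hr : ∀ a b, r a b → a ∈ S ∧ b ∈ S) {a b : α} (ha : a ∉ S)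
    (hab : Quot.mk r a = Quot.mk r b) : a = b := by
  have heq : (a = a) = (b = a) := congrArg (Quot.lift (· = a) fun x y hxy => propext
    ⟨fun hx => absurd (hx ▸ (hr x y hxy).1) ha, fun hy => absurd (hy ▸ (hr x y hxy).2) ha⟩) hab
  exact (heq.mp rfl).symm

variable {m n : ℕ} {C : Set (Minor2 m n)} {p q : Fin m × Fin n}

theorem Minor2.VertEdge.mem_vertexSet {δ : Minor2 m n} (hpq : δ.VertEdge p q) :
    p ∈ δ.vertexSet ∧ q ∈ δ.vertexSet := by
  simp only [Minor2.VertEdge, Set.pair_eq_pair_iff] at hpq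
  rcases hpq with (⟨rfl, rfl⟩ | ⟨rfl, rfl⟩) | ⟨rfl, rfl⟩ | ⟨rfl, rfl⟩ <;> simp [Minor2.vertexSet]

theorem Minor2.VertEdge.snd_eq {δ : Minor2 m n} (hpq : δ.VertEdge p q) : p.2 = q.2 := by
  simp only [Minor2.VertEdge, Set.pair_eq_pair_iff] at hpq
  rcases hpq with (⟨rfl, rfl⟩ | ⟨rfl, rfl⟩) | ⟨rfl, rfl⟩ | ⟨rfl, rfl⟩ <;> rfl

theorem Minor2.HorizEdge.fst_eq_s6 {δ : Minor2 m n} (hpq : δ.HorizEdge p q) : p.1 = q.1 := by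
  simp only [Minor2.HorizEdge, Set.pair_eq_pair_iff] at hpq
  rcases hpq with (⟨rfl, rfl⟩ | ⟨rfl, rfl⟩) | ⟨rfl, rfl⟩ | ⟨rfl, rfl⟩ <;> rfl

theorem vertAdj.mem_vertexSetOf (hpq : vertAdj C p q) :
    p ∈ vertexSetOf C ∧ q ∈ vertexSetOf C := by
  obtain ⟨δ, hδ, hpq⟩ := hpq
  exact hpq.mem_vertexSet.imp (Set.mem_biUnion hδ) (Set.mem_biUnion hδ)

theorem snd_eq_of_vClass_eq (hpq : vClass C p = vClass C q) : p.2 = q.2 :=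
  congrArg (Quot.lift Prod.snd fun _ _ ⟨_, _, hxy⟩ => hxy.snd_eq) hpq

theorem fst_eq_of_hClass_eq (hpq : hClass C p = hClass C q) : p.1 = q.1 :=
  congrArg (Quot.lift Prod.fst fun _ _ ⟨_, _, hxy⟩ => hxy.fst_eq_s6) hpq

theorem eq_of_vClass_eq_of_hClass_eq (hv : vClass C p = vClass C q) (hh : hClass C p = hClass C q) :
    p = q :=
  Prod.ext (fst_eq_of_hClass_eq hh) (snd_eq_of_vClass_eq hv)

theorem mem_vertexSetOf_of_vClass_eq (hv : vClass C p = vClass C q) (hpq : p ≠ q) :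
    p ∈ vertexSetOf C := by
  by_contra hp
  exact hpq (eq_of_quot_mk_eq_of_notMem (r := vertAdj C) (fun _ _ => vertAdj.mem_vertexSetOf) hp hv)

theorem disjoint_vertexSetOf_minorsAvoiding (C : Set (Minor2 m n)) (V : Set (Fin m × Fin n)) :
    Disjoint (vertexSetOf (minorsAvoiding C V)) V := by
  simp only [vertexSetOf, Set.disjoint_iUnion_left]
  exact fun δ hδ => Set.disjoint_iff_inter_eq_empty.mpr hδ.2

end Intervals

section ToricIdeal

variable (K : Type*) [Field K] {m n : ℕ} {C : Set (Minor2 m n)}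

theorem CycleIn.isAlternatingCycle (σ : CycleIn C) :
    IsAlternatingCycle (hClass C) (vClass C) σ.p σ.q :=
  ⟨σ.shareV, σ.shareH, σ.injH, σ.injV⟩

theorem IsAlternatingCycle.exists_cycleIn {r : ℕ} {p q : Fin (r + 2) → Fin m × Fin n}
    (hpq : IsAlternatingCycle (hClass C) (vClass C) p q) :
    ∃ σ : CycleIn C, cycleBinom K σ = ∏ k, X (p k) - ∏ k, X (q k) := by
  have hne (k) : p k ≠ q k := by
    intro hk
    have hsucc : k = k + 1 := hpq.injective_h ((congrArg (hClass C) hk).trans (hpq.h_eq k))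
    simp at hsucc
  exact ⟨{ len := r, p, q
           p_mem := fun k => mem_vertexSetOf_of_vClass_eq (hpq.v_eq k) (hne k)
           q_mem := fun k => mem_vertexSetOf_of_vClass_eq (hpq.v_eq k).symm (hne k).symm
           shareV := hpq.v_eq, shareH := hpq.h_eq
           injH := hpq.injective_h, injV := hpq.injective_v }, rfl⟩

theorem toricIdeal_eq_span_cycleBinom (C : Set (Minor2 m n)) :
    toricIdeal K C = Ideal.span (Set.range (cycleBinom K : CycleIn C → _)) := by
  refine (ker_edgeMap (R := K) (h := hClass C) (v := vClass C)).trans (le_antisymm ?_ ?_)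
  · rw [Ideal.span_le]
    rintro _ ⟨r | r, p, q, hpq, rfl⟩
    · have hh : hClass C (q 0) = hClass C (p 0) := hpq.h_eq 0
      have hp : p 0 = q 0 := eq_of_vClass_eq_of_hClass_eq (hpq.v_eq 0) hh.symm
      simp [hp]
    · exact Ideal.subset_span (hpq.exists_cycleIn K)
  · refine Ideal.span_mono ?_
    rintro _ ⟨σ, rfl⟩
    exact ⟨σ.len + 1, σ.p, σ.q, σ.isAlternatingCycle, rfl⟩

theorem cycleBinom_mem_toricIdeal (σ : CycleIn C) : cycleBinom K σ ∈ toricIdeal K C := by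
  rw [toricIdeal_eq_span_cycleBinom]
  exact Ideal.subset_span ⟨σ, rfl⟩

theorem prod_X_notMem_toricIdeal (C : Set (Minor2 m n)) {ι : Type*} (s : Finset ι)
    (g : ι → Fin m × Fin n) : ∏ k ∈ s, X (g k) ∉ toricIdeal K C :=
  edgeMap_prod_X_ne_zero (R := K) s g

theorem toricIdeal_le_comap_killVars {V : Set (Fin m × Fin n)} (hV : Disjoint (vertexSetOf C) V) :
    toricIdeal K C ≤ (toricIdeal K C).comap (killVars K V) := by
  refine (toricIdeal_eq_span_cycleBinom K C).le.trans (Ideal.span_le.mpr ?_)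
  rintro _ ⟨σ, rfl⟩
  have hfix : killVars K V (cycleBinom K σ) = cycleBinom K σ := by
    rw [cycleBinom, map_sub,
      killVars_prod_X_of_forall_notMem fun k => Set.disjoint_left.mp hV (σ.p_mem k),
      killVars_prod_X_of_forall_notMem fun k => Set.disjoint_left.mp hV (σ.q_mem k)]
  rw [SetLike.mem_coe, Ideal.mem_comap, hfix]
  exact cycleBinom_mem_toricIdeal K σ

end ToricIdeal

section PrimeIdeals

variable (K : Type*) [Field K] {m n : ℕ} (C : Set (Minor2 m n)) (V : Set (Fin m × Fin n))

theorem mem_PW_iff_killVars_mem {f : MvPolynomial (Fin m × Fin n) K} :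
    f ∈ PW K C V ↔ killVars K V f ∈ toricIdeal K (minorsAvoiding C V) :=
  mem_span_X_sup_iff_killVars_mem
    (toricIdeal_le_comap_killVars K (disjoint_vertexSetOf_minorsAvoiding C V))

theorem X_mem_PW_iff {p : Fin m × Fin n} : X p ∈ PW K C V ↔ p ∈ V := by
  rw [mem_PW_iff_killVars_mem]
  by_cases hp : p ∈ V
  · simp [killVars_X_of_mem hp, hp]
  · simpa [killVars_X_of_notMem hp, hp] using
      prod_X_notMem_toricIdeal K (minorsAvoiding C V) {p} id

theorem prod_X_sub_prod_X_mem_PW_iff {ι κ : Type*} [Fintype ι] [Fintype κ]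
    (p : ι → Fin m × Fin n) (q : κ → Fin m × Fin n) :
    ∏ k, X (p k) - ∏ k, X (q k) ∈ PW K C V ↔
      ∏ k, X (p k) - ∏ k, X (q k) ∈ toricIdeal K (minorsAvoiding C V) ∨
        (∃ k, p k ∈ V) ∧ ∃ l, q l ∈ V := by
  refine ⟨fun hf => ?_, ?_⟩
  · rw [mem_PW_iff_killVars_mem, map_sub] at hf
    by_cases hp : ∃ k, p k ∈ V <;> by_cases hq : ∃ l, q l ∈ V
    · exact Or.inr ⟨hp, hq⟩
    · rw [killVars_prod_X_of_exists_mem hp, zero_sub, neg_mem_iff,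
        killVars_prod_X_of_forall_notMem (not_exists.mp hq)] at hf
      exact absurd hf (prod_X_notMem_toricIdeal K _ _ _)
    · rw [killVars_prod_X_of_exists_mem hq, sub_zero,
        killVars_prod_X_of_forall_notMem (not_exists.mp hp)] at hf
      exact absurd hf (prod_X_notMem_toricIdeal K _ _ _)
    · rw [killVars_prod_X_of_forall_notMem (not_exists.mp hp),
        killVars_prod_X_of_forall_notMem (not_exists.mp hq)] at hf
      exact Or.inl hf
  · rintro (hJ | ⟨hp, hq⟩)
    · exact Ideal.mem_sup_right hJ
    · rw [mem_PW_iff_killVars_mem, map_sub, killVars_prod_X_of_exists_mem hp,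
        killVars_prod_X_of_exists_mem hq, sub_zero]
      exact Ideal.zero_mem _

theorem varIdeal_le_PW_iff {W : Set (Fin m × Fin n)} : varIdeal K W ≤ PW K C V ↔ W ⊆ V := by
  rw [varIdeal, Ideal.span_le, Set.image_subset_iff]
  exact forall₂_congr fun p _ => X_mem_PW_iff K C V

theorem toricIdeal_le_PW_iff {D : Set (Minor2 m n)} :
    toricIdeal K D ≤ PW K C V ↔ ∀ σ : CycleIn D,
      cycleBinom K σ ∉ toricIdeal K (minorsAvoiding C V) → ∃ k l, σ.p k ∈ V ∧ σ.q l ∈ V := by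
  rw [toricIdeal_eq_span_cycleBinom, Ideal.span_le, Set.range_subset_iff]
  refine forall_congr' fun σ => ?_
  simp only [exists_and_left, exists_and_right]
  exact (prod_X_sub_prod_X_mem_PW_iff K C V σ.p σ.q).trans or_iff_not_imp_left

end PrimeIdeals

theorem statement6_general (K : Type*) [Field K] {m n : ℕ} (C : Set (Minor2 m n))
    (W V : Set (Fin m × Fin n)) :
    PW K C W ≤ PW K C V ↔
      W ⊆ V ∧
        ∀ σ : CycleIn (minorsAvoiding C W),
          cycleBinom K σ ∈ toricIdeal K (minorsAvoiding C W) →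
          cycleBinom K σ ∉ toricIdeal K (minorsAvoiding C V) →
          ∃ k l, σ.p k ∈ V ∧ σ.q l ∈ V := by
  have hmem (σ : CycleIn (minorsAvoiding C W)) := cycleBinom_mem_toricIdeal K σ
  simp only [hmem, forall_const]
  exact sup_le_iff.trans
    (and_congr (varIdeal_le_PW_iff K C V) (toricIdeal_le_PW_iff K C V))

theorem statement6 (K : Type*) [Field K] (m n : ℕ) [NeZero n]
    (C : Set (Minor2 m n)) (hC : ∀ δ ∈ C, δ.b1 = 0)
    (W V : Set (Fin m × Fin n)) (hW : Admissible C W) (hV : Admissible C V) :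
    PW K C W ≤ PW K C V ↔
      W ⊆ V ∧
        ∀ σ : CycleIn (minorsAvoiding C W),
          cycleBinom K σ ∈ toricIdeal K (minorsAvoiding C W) →
          cycleBinom K σ ∉ toricIdeal K (minorsAvoiding C V) →
          ∃ k l, σ.p k ∈ V ∧ σ.q l ∈ V :=
  statement6_general K C W V
end
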